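/- For every N ≥ 3 and all indices i₁, …, i_N ∈ {0,1}, the ring-network quantum distribution satisfies P_Q(a₁ = 1_{i₁}, …, a_N = 1_{i_N}) = 2^{−N}·(∏_{n=1}^N u_{i_n} + ∏_{n=1}^N v_{i_n})², i.e. |⟨1̄_{i₁}⊗⋯⊗1̄_{i_N} | (ψ⁺)^{⊗N}⟩|² = 2^{−N}(∏_n u_{i_n} + ∏_n v_{i_n})², where the tensor factors are matched according to the ring wiring. -/

import Mathlib

open MeasureTheory

noncomputable def uco (u : ℝ) : Fin 2 → ℝ := ![u, Real.sqrt (1 - u ^ 2)]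
noncomputable def vco (u : ℝ) : Fin 2 → ℝ := ![Real.sqrt (1 - u ^ 2), -u]

inductive Outc where
  | zero : Outc
  | one : Fin 2 → Outc
  | two : Outc
  deriving DecidableEq, Fintype

noncomputable def psiPlus : Fin 2 → Fin 2 → ℝ := fun i j =>
  if i = 0 ∧ j = 1 then (Real.sqrt 2)⁻¹ else if i = 1 ∧ j = 0 then (Real.sqrt 2)⁻¹ else 0

noncomputable def basisVec (u : ℝ) : Outc → Fin 2 → Fin 2 → ℝ
  | Outc.zero => fun l r => if l = 0 ∧ r = 0 then 1 else 0
  | Outc.one i => fun l r => if l = 0 ∧ r = 1 then uco u i else if l = 1 ∧ r = 0 then vco u i else 0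
  | Outc.two => fun l r => if l = 1 ∧ r = 1 then 1 else 0

def finNext {N : ℕ} (k : Fin N) : Fin N := ⟨(k.val + 1) % N, Nat.mod_lt _ k.pos⟩

noncomputable def ringAmp (N : ℕ) (u : ℝ) (a : Fin N → Outc) : ℝ :=
  ∑ L : Fin N → Fin 2, ∑ R : Fin N → Fin 2,
    (∏ k, basisVec u (a k) (L k) (R k)) * ∏ k, psiPlus (R k) (L (finNext k))

noncomputable def ringP (N : ℕ) (u : ℝ) (a : Fin N → Outc) : ℝ := ringAmp N u a ^ 2

/-!
Summing over the bits `R` turns the amplitude into `∑ L, ∏ k, M k (L k) (L (k + 1))`, where `M k` is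
the matrix of the `k`-th measurement vector times the matrix of `ψ⁺`. Both matrices are
antidiagonal, so `M k` is diagonal, and a summand survives only if the bit `L k` is the same all
around the ring. The constant assignments `0` and `1` give the products `∏ u` and `∏ v`.
-/

lemma eq_const_of_invariant_of_iterate_surjective {ι α : Type*} {σ : ι → ι} {k₀ : ι}
    (hσ : ∀ k, ∃ n : ℕ, σ^[n] k₀ = k) {x : ι → α} (hx : ∀ k, x (σ k) = x k) :
    x = Function.const ι (x k₀) := by
  funext k
  obtain ⟨n, rfl⟩ := hσ k
  have hsemi : Function.Semiconj x σ id := hx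
  simpa using hsemi.iterate_right n k₀

section Contraction

variable {ι α β γ S : Type*} [Fintype ι] [CommSemiring S]

lemma sum_prod_mul_prod_eq_prod_mul_apply [DecidableEq ι] [Fintype β]
    (A : ι → Matrix α β S) (B : ι → Matrix β γ S) (x : ι → α) (z : ι → γ) :
    ∑ y : ι → β, (∏ k, A k (x k) (y k)) * ∏ k, B k (y k) (z k) =
      ∏ k, (A k * B k) (x k) (z k) := by
  simp_rw [Matrix.mul_apply, ← Finset.prod_mul_distrib, Finset.prod_univ_sum,
    Fintype.piFinset_univ]

lemma sum_prod_diagonal_apply_eq_sum_prod [DecidableEq ι] [Fintype α] [DecidableEq α]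
    {σ : ι → ι} {k₀ : ι} (hσ : ∀ k, ∃ n : ℕ, σ^[n] k₀ = k) (d : ι → α → S) :
    ∑ x : ι → α, ∏ k, Matrix.diagonal (d k) (x k) (x (σ k)) = ∑ a, ∏ k, d k a := by
  have : Nonempty ι := ⟨k₀⟩
  refine (Fintype.sum_of_injective (Function.const ι) Function.const_injective _ _ ?_ ?_).symm
  · intro x hx
    obtain ⟨k, hk⟩ : ∃ k, x (σ k) ≠ x k := by
      by_contra! hinv
      exact hx ⟨x k₀, (eq_const_of_invariant_of_iterate_surjective hσ hinv).symm⟩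
    exact Finset.prod_eq_zero (Finset.mem_univ k) (Matrix.diagonal_apply_ne' _ hk)
  · simp

end Contraction

lemma finNext_eq_add_one {N : ℕ} [NeZero N] (k : Fin N) : finNext k = k + 1 := by
  ext
  simp [finNext, Fin.val_add]

lemma finNext_iterate_zero {N : ℕ} [NeZero N] (k : Fin N) : finNext^[k] 0 = k := by
  rw [funext finNext_eq_add_one, add_right_iterate_apply_zero]
  open Fin.CommRing in rw [nsmul_one, Fin.cast_val_eq_self]

lemma basisVec_one_mul_psiPlus (u : ℝ) (i : Fin 2) :
    Matrix.of (basisVec u (Outc.one i)) * Matrix.of psiPlus =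
      Matrix.diagonal ((Real.sqrt 2)⁻¹ • ![uco u i, vco u i]) := by
  ext l m
  fin_cases l <;> fin_cases m <;> simp [Matrix.mul_apply, basisVec, psiPlus, mul_comm]

theorem ringAmp_one {N : ℕ} [NeZero N] (u : ℝ) (i : Fin N → Fin 2) :
    ringAmp N u (fun k => Outc.one (i k)) =
      (Real.sqrt 2)⁻¹ ^ N * (∏ n, uco u (i n) + ∏ n, vco u (i n)) := by
  calc ringAmp N u (fun k => Outc.one (i k))
      = ∑ L : Fin N → Fin 2, ∏ k, (Matrix.of (basisVec u (Outc.one (i k))) * Matrix.of psiPlus)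
          (L k) (L (finNext k)) :=
        Finset.sum_congr rfl fun L _ =>
          sum_prod_mul_prod_eq_prod_mul_apply (fun k => Matrix.of (basisVec u (Outc.one (i k))))
            (fun _ => Matrix.of psiPlus) L fun k => L (finNext k)
    _ = ∑ b, ∏ k, ((Real.sqrt 2)⁻¹ • ![uco u (i k), vco u (i k)]) b := by
        simp_rw [basisVec_one_mul_psiPlus]
        exact sum_prod_diagonal_apply_eq_sum_prod (fun k => ⟨k.val, finNext_iterate_zero k⟩) _
    _ = (Real.sqrt 2)⁻¹ ^ N * (∏ n, uco u (i n) + ∏ n, vco u (i n)) := by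
        simp [Fin.sum_univ_two, Finset.prod_mul_distrib, mul_add]

theorem stmt_13_general (N : ℕ) [NeZero N] (u : ℝ) (i : Fin N → Fin 2) :
    ringP N u (fun k => Outc.one (i k)) =
      ((2 : ℝ) ^ N)⁻¹ * (∏ n, uco u (i n) + ∏ n, vco u (i n)) ^ 2 := by
  have hnorm : ((Real.sqrt 2)⁻¹ ^ N) ^ 2 = ((2 : ℝ) ^ N)⁻¹ := by
    rw [pow_right_comm, inv_pow, Real.sq_sqrt zero_le_two, inv_pow]
  rw [ringP, ringAmp_one, mul_pow, hnorm]

/-- probability of the all-`1` outcomes on the `N`-party ring: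
`P_Q(1_{i₁},…,1_{i_N}) = 2^{-N} (∏ u_{i_n} + ∏ v_{i_n})²`. -/
theorem stmt_13 (N : ℕ) (hN : 3 ≤ N) (u : ℝ) (hu0 : 0 < u) (hu1 : u < 1)
    (i : Fin N → Fin 2) :
    ringP N u (fun k => Outc.one (i k)) =
      ((2 : ℝ) ^ N)⁻¹ * (∏ n, uco u (i n) + ∏ n, vco u (i n)) ^ 2 := by
  have : NeZero N := ⟨by omega⟩
  exact stmt_13_general N u i
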